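/- Let ε ≥ 2^{−2^{n−1}}. For every leader's decision x = (x₁, x₂) in the box [x̲₁, x̄₁] × [x̲₂, x̄₂], the set of maximizers of f(x, ·) over Ω_ε(x) contains at least two distinct points; in particular, it is not a singleton. -/

import Mathlib

/-!
Feasibility gives `y₁ = 1/2 - yₙ ≤ 1/2`, and the slack factor `x₁ + x₂ - y_{n+1} - y_{n+2}` is
nonnegative, so the follower's value never exceeds `1/2`. When `ε ≥ 2^(-2^(n-1))`, repeated
squaring starting from `y₁ = 1/2` ends below the tolerance, so `yₙ = 0` is ε-feasible together with
`y₁ = 1/2`. With `yₙ = 0` the objective no longer depends on `y_{n+1}`, and every choice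
`y_{n+1} ∈ [0, x₁]` yields a maximizer.
-/


/-- The set `Ω_ε(x)` of ε-feasible points: all linear constraints of `Ω(x)`
hold exactly and each quadratic constraint may be violated by at most `ε`. -/
def OmegaEps (n : ℕ) (x1 x2 ε : ℝ) : Set (Fin (n + 2) → ℝ) :=
  {y | y ⟨0, by omega⟩ + y ⟨n - 1, by omega⟩ = 1 / 2 ∧
    (∀ i : ℕ, ∀ _h1 : 1 ≤ i, ∀ _h2 : i ≤ n - 1,
      (y ⟨i - 1, by omega⟩) ^ 2 ≤ y ⟨i, by omega⟩ + ε) ∧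
    (∀ i : ℕ, ∀ _h1 : 1 ≤ i, ∀ _h2 : i ≤ n, 0 ≤ y ⟨i - 1, by omega⟩) ∧
    0 ≤ y ⟨n, by omega⟩ ∧ y ⟨n, by omega⟩ ≤ x1 ∧
    -x2 ≤ y ⟨n + 1, by omega⟩ ∧ y ⟨n + 1, by omega⟩ ≤ x2}

/-- The follower's objective `f(x, y) = y₁ − yₙ (x₁ + x₂ − y_{n+1} − y_{n+2})`. -/
noncomputable def follower (n : ℕ) (x1 x2 : ℝ) (y : Fin (n + 2) → ℝ) : ℝ :=
  y ⟨0, by omega⟩ -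
    y ⟨n - 1, by omega⟩ * (x1 + x2 - y ⟨n, by omega⟩ - y ⟨n + 1, by omega⟩)

/-- The set of maximizers of the follower's objective over `Ω_ε(x)`. -/
def SEps (n : ℕ) (x1 x2 ε : ℝ) : Set (Fin (n + 2) → ℝ) :=
  {y | y ∈ OmegaEps n x1 x2 ε ∧
    ∀ y' ∈ OmegaEps n x1 x2 ε, follower n x1 x2 y' ≤ follower n x1 x2 y}

/-- The point `(2^(-2^0), 2^(-2^1), …, 2^(-2^(n-2)), 0, t, 0)`, with coordinates indexed from `0`. -/
noncomputable def chainPoint (n : ℕ) (t : ℝ) : Fin (n + 2) → ℝ :=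
  fun k => if (k : ℕ) < n - 1 then 1 / 2 ^ 2 ^ (k : ℕ) else if (k : ℕ) = n then t else 0

lemma follower_le_half {n : ℕ} (hn : 2 ≤ n) {x1 x2 ε : ℝ} {y : Fin (n + 2) → ℝ}
    (hy : y ∈ OmegaEps n x1 x2 ε) : follower n x1 x2 y ≤ 1 / 2 := by
  obtain ⟨hsum, -, hpos, -, h1, -, h2⟩ := hy
  have hlast := hpos n (by omega) le_rfl
  have hslack : 0 ≤ x1 + x2 - y ⟨n, by omega⟩ - y ⟨n + 1, by omega⟩ := by linarith
  have := mul_nonneg hlast hslack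
  unfold follower
  linarith

lemma chainPoint_mem_OmegaEps {n : ℕ} (hn : 2 ≤ n) {x1 x2 ε t : ℝ} (hx2 : 0 ≤ x2)
    (hε : 1 / 2 ^ 2 ^ (n - 1) ≤ ε) (ht0 : 0 ≤ t) (ht1 : t ≤ x1) :
    chainPoint n t ∈ OmegaEps n x1 x2 ε := by
  have hε0 : 0 ≤ ε := le_trans (by positivity) hε
  have hn1 : n - 1 ≠ n := by omega
  have hn0 : 0 < n - 1 := by omega
  refine ⟨?_, ?_, ?_, ?_, ?_, ?_, ?_⟩
  · simp [chainPoint, hn0, hn1]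
  · intro i h1 h2
    have hi : i - 1 < n - 1 := by omega
    have hsq : (1 / 2 ^ 2 ^ (i - 1) : ℝ) ^ 2 = 1 / 2 ^ 2 ^ i := by
      obtain ⟨j, rfl⟩ : ∃ j, i = j + 1 := ⟨i - 1, by omega⟩
      rw [Nat.add_sub_cancel, div_pow, one_pow, ← pow_mul, ← pow_succ]
    simp only [chainPoint, if_pos hi, hsq]
    rcases h2.lt_or_eq with h | rfl
    · rw [if_pos h]
      linarith
    · rw [if_neg (lt_irrefl _), if_neg hn1]
      linarith
  · intro i _ _
    simp only [chainPoint]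
    split_ifs <;> positivity
  all_goals
    have h3 : ¬ n < n - 1 := by omega
    have h4 : ¬ n + 1 < n - 1 := by omega
    simp [chainPoint, h3, h4, ht0, ht1, hx2]

lemma chainPoint_mem_SEps {n : ℕ} (hn : 2 ≤ n) {x1 x2 ε t : ℝ} (hx2 : 0 ≤ x2)
    (hε : 1 / 2 ^ 2 ^ (n - 1) ≤ ε) (ht0 : 0 ≤ t) (ht1 : t ≤ x1) :
    chainPoint n t ∈ SEps n x1 x2 ε := by
  refine ⟨chainPoint_mem_OmegaEps hn hx2 hε ht0 ht1, fun y' hy' => ?_⟩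
  have hn1 : n - 1 ≠ n := by omega
  have hn0 : 0 < n - 1 := by omega
  have hval : follower n x1 x2 (chainPoint n t) = 1 / 2 := by
    simp [follower, chainPoint, hn0, hn1]
  exact hval ▸ follower_le_half hn hy'

/-- Let `ε ≥ 2^(−2^(n−1))`. For every leader's decision `x` in the box, the
set of maximizers of `f(x, ·)` over `Ω_ε(x)` contains at least two distinct
points; in particular, it is not a singleton. -/
theorem stmt11 (n : ℕ) (hn : 2 ≤ n)
    (xl1 xl2 xu1 xu2 : ℝ) (hl1 : 1 ≤ xl1) (hl2 : 1 ≤ xl2)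
    (hu1 : xl1 < xu1) (hu2 : xl2 < xu2)
    (x1 x2 : ℝ) (hx1 : x1 ∈ Set.Icc xl1 xu1) (hx2 : x2 ∈ Set.Icc xl2 xu2)
    (ε : ℝ) (hε : 1 / 2 ^ 2 ^ (n - 1) ≤ ε) :
    ∃ y1 ∈ SEps n x1 x2 ε, ∃ y2 ∈ SEps n x1 x2 ε, y1 ≠ y2 := by
  have h1 : 1 ≤ x1 := hl1.trans hx1.1
  have h2 : 0 ≤ x2 := by linarith [hx2.1]
  refine ⟨chainPoint n 0, chainPoint_mem_SEps hn h2 hε le_rfl (by linarith),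
    chainPoint n 1, chainPoint_mem_SEps hn h2 hε zero_le_one h1, fun h => ?_⟩
  have h3 : ¬ n < n - 1 := by omega
  have := congrFun h ⟨n, by omega⟩
  simp [chainPoint, h3] at this
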